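/- arXiv:math/0104131 — 8 statements merged into one kernel-verified Lean document; each statement's English description precedes it below -/
import Mathlib

section
/- Let m be a positive integer and write m = 2^k·m' with m' odd. Then for every function x : ℕ → ℚ, 2·I_{2m}(x) = I_m(x²) + I_{m'}(x'), where x² denotes the function r ↦ x(r)² and x' denotes the function r ↦ x(2^{k+1}·r). -/
open Finset

/-- Cycle index of the regular cyclic group of order `n`:
`I_n(x) = (1/n) * ∑_{r | n} φ(r) * x(r)^(n/r)`. -/
def cycleIndex (n : ℕ) (x : ℕ → ℚ) : ℚ :=
  (1 / (n : ℚ)) * ∑ r ∈ n.divisors, (Nat.totient r : ℚ) * x r ^ (n / r)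

/-- For odd `n`, the divisors of `2^(k+1) * n` are those of `2^k * n` together with
`2^(k+1) * r` for `r ∣ n`. -/
theorem Nat.sum_divisors_two_pow_succ_mul {M : Type*} [AddCommMonoid M] (k : ℕ) {n : ℕ}
    (hn : Odd n) (f : ℕ → M) :
    ∑ r ∈ (2 ^ (k + 1) * n).divisors, f r =
      ∑ r ∈ (2 ^ k * n).divisors, f r + ∑ r ∈ n.divisors, f (2 ^ (k + 1) * r) := by
  have hn0 : n ≠ 0 := hn.pos.ne'
  have hinj : Function.Injective fun r : ℕ => 2 ^ (k + 1) * r :=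
    mul_right_injective₀ (by positivity)
  have hdisj : Disjoint (2 ^ k * n).divisors
      (n.divisors.image fun r => 2 ^ (k + 1) * r) := by
    rw [Finset.disjoint_left]
    intro r hr hr'
    obtain ⟨s, -, rfl⟩ := Finset.mem_image.mp hr'
    have h : 2 ^ k * 2 ∣ 2 ^ k * n := by
      rw [← pow_succ]
      exact (Dvd.intro s rfl).trans (Nat.dvd_of_mem_divisors hr)
    have h2 : 2 ∣ n := Nat.dvd_of_mul_dvd_mul_left (by positivity) h
    exact (Nat.not_even_iff_odd.mpr hn) (even_iff_two_dvd.mpr h2)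
  have hunion : (2 ^ (k + 1) * n).divisors =
      (2 ^ k * n).divisors ∪ n.divisors.image fun r => 2 ^ (k + 1) * r := by
    ext r
    simp only [Finset.mem_union, Finset.mem_image, Nat.mem_divisors]
    constructor
    · rintro ⟨h, -⟩
      obtain ⟨a, b, ha, hb, rfl⟩ := exists_dvd_and_dvd_of_dvd_mul h
      obtain ⟨i, hi, rfl⟩ := (Nat.dvd_prime_pow Nat.prime_two).mp ha
      rcases hi.eq_or_lt with rfl | hlt
      · exact Or.inr ⟨b, ⟨hb, hn0⟩, rfl⟩
      · exact Or.inl ⟨mul_dvd_mul (pow_dvd_pow 2 (by omega)) hb, by positivity⟩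
    · rintro (⟨h, -⟩ | ⟨s, ⟨h, -⟩, rfl⟩)
      · exact ⟨h.trans (mul_dvd_mul_right (pow_dvd_pow 2 k.le_succ) n), by positivity⟩
      · exact ⟨mul_dvd_mul_left _ h, by positivity⟩
  rw [hunion, Finset.sum_union hdisj, Finset.sum_image hinj.injOn]

/-- For `m = 2^k * m'` with `m'` odd,
`2·I_{2m}(x) = I_m(x²) + I_{m'}(r ↦ x(2^{k+1}·r))`. -/
theorem two_mul_cycleIndex_two_mul (m k m' : ℕ) (hm : 0 < m) (hodd : Odd m')
    (hfac : m = 2 ^ k * m') (x : ℕ → ℚ) :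
    2 * cycleIndex (2 * m) x =
      cycleIndex m (fun r => x r ^ 2) +
        cycleIndex m' (fun r => x (2 ^ (k + 1) * r)) := by
  subst hfac
  have hm' : (m' : ℚ) ≠ 0 := Nat.cast_ne_zero.mpr hodd.pos.ne'
  have hdouble : 2 * (2 ^ k * m') = 2 ^ (k + 1) * m' := by ring
  have hold : ∑ r ∈ (2 ^ k * m').divisors,
        (Nat.totient r : ℚ) * x r ^ (2 ^ (k + 1) * m' / r) =
      ∑ r ∈ (2 ^ k * m').divisors, (Nat.totient r : ℚ) * (x r ^ 2) ^ (2 ^ k * m' / r) := by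
    refine Finset.sum_congr rfl fun r hr => ?_
    rw [← hdouble, Nat.mul_div_assoc _ (Nat.dvd_of_mem_divisors hr), pow_mul]
  have hnew : ∑ r ∈ m'.divisors, (Nat.totient (2 ^ (k + 1) * r) : ℚ) *
        x (2 ^ (k + 1) * r) ^ (2 ^ (k + 1) * m' / (2 ^ (k + 1) * r)) =
      2 ^ k * ∑ r ∈ m'.divisors, (Nat.totient r : ℚ) * x (2 ^ (k + 1) * r) ^ (m' / r) := by
    rw [Finset.mul_sum]
    refine Finset.sum_congr rfl fun r hr => ?_
    have hcop : Nat.Coprime (2 ^ (k + 1)) r :=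
      (Nat.coprime_two_left.mpr (hodd.of_dvd_nat (Nat.dvd_of_mem_divisors hr))).pow_left _
    rw [Nat.mul_div_mul_left _ _ (by positivity), Nat.totient_mul hcop,
      Nat.totient_prime_pow_succ Nat.prime_two]
    push_cast
    ring
  unfold cycleIndex
  rw [hdouble, Nat.sum_divisors_two_pow_succ_mul k hodd, hold, hnew]
  push_cast
  field_simp
  ring
end

section
/- Let m be a positive integer. Then for every function x : ℕ → ℚ, I_m(x) = I_{2m}(y) + (1/(2m))·∑_{r | m, r odd} φ(r)·x(r)^{m/r}, where y : ℕ → ℚ is defined by y(r) := 0 for odd r and y(r) := x(r/2) for even r. -/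
open Finset

/-- A sum over the divisors of `2 * m` that vanishes at the odd ones is a sum over the divisors
of `m`. -/
theorem sum_divisors_two_mul_of_odd_eq_zero {M : Type*} [AddCommMonoid M] {m : ℕ} (hm : m ≠ 0)
    (f : ℕ → M) (hf : ∀ r ∈ (2 * m).divisors, Odd r → f r = 0) :
    ∑ r ∈ (2 * m).divisors, f r = ∑ s ∈ m.divisors, f (2 * s) := by
  have hinj : Set.InjOn (fun s => 2 * s) (m.divisors : Set ℕ) :=
    (mul_right_injective₀ two_ne_zero).injOn
  rw [← Finset.sum_image (g := fun s => 2 * s) hinj]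
  symm
  apply Finset.sum_subset
  · intro r hr
    obtain ⟨s, hs, rfl⟩ := Finset.mem_image.1 hr
    exact Nat.mem_divisors.2
      ⟨Nat.mul_dvd_mul_left 2 (Nat.dvd_of_mem_divisors hs), by omega⟩
  · intro r hr hr'
    refine hf r hr (Nat.not_even_iff_odd.1 fun he => hr' ?_)
    obtain ⟨s, rfl⟩ := he.two_dvd
    exact Finset.mem_image.2 ⟨s, Nat.mem_divisors.2
      ⟨Nat.dvd_of_mul_dvd_mul_left two_pos (Nat.dvd_of_mem_divisors hr), hm⟩, rfl⟩

/-- `2 φ(s)` exceeds `φ(2s)` by `φ(s)` when `s` is odd, and equals it when `s` is even. -/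
theorem two_mul_totient_eq_totient_two_mul_add (s : ℕ) :
    2 * Nat.totient s = Nat.totient (2 * s) + if Odd s then Nat.totient s else 0 := by
  split_ifs with h
  · rw [Nat.totient_two_mul_of_odd h, two_mul]
  · rw [Nat.totient_two_mul_of_even (Nat.not_odd_iff_even.1 h), add_zero]

/-- `I_m(x) = I_{2m}(y) + (1/(2m))·∑_{r | m, r odd} φ(r)·x(r)^{m/r}`, where
`y(r) = 0` for odd `r` and `y(r) = x(r/2)` for even `r`. -/
theorem cycleIndex_eq_cycleIndex_two_mul_add (m : ℕ) (hm : 0 < m) (x : ℕ → ℚ) :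
    cycleIndex m x =
      cycleIndex (2 * m) (fun r => if Odd r then 0 else x (r / 2)) +
        (1 / (2 * (m : ℚ))) *
          ∑ r ∈ m.divisors.filter (fun r => Odd r),
            (Nat.totient r : ℚ) * x r ^ (m / r) := by
  have hm' : (m : ℚ) ≠ 0 := Nat.cast_ne_zero.2 hm.ne'
  unfold cycleIndex
  rw [sum_divisors_two_mul_of_odd_eq_zero hm.ne', Finset.sum_filter]
  · have hsum : 2 * ∑ r ∈ m.divisors, (Nat.totient r : ℚ) * x r ^ (m / r) =
        ∑ s ∈ m.divisors, (Nat.totient (2 * s) : ℚ) *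
          (if Odd (2 * s) then 0 else x (2 * s / 2)) ^ (2 * m / (2 * s)) +
        ∑ r ∈ m.divisors, if Odd r then (Nat.totient r : ℚ) * x r ^ (m / r) else 0 := by
      rw [Finset.mul_sum, ← Finset.sum_add_distrib]
      refine Finset.sum_congr rfl fun s _ => ?_
      have hodd : ¬ Odd (2 * s) := Nat.not_odd_iff_even.2 (even_two_mul s)
      have htot : 2 * (Nat.totient s : ℚ) =
          Nat.totient (2 * s) + if Odd s then (Nat.totient s : ℚ) else 0 := by
        exact_mod_cast two_mul_totient_eq_totient_two_mul_add s
      rw [if_neg hodd, Nat.mul_div_cancel_left s two_pos, Nat.mul_div_mul_left m s two_pos,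
        ← mul_assoc, htot, add_mul, ite_mul, zero_mul]
    push_cast
    rw [← mul_add, ← hsum]
    field_simp
  · intro r hr hodd
    have hpos : 2 * m / r ≠ 0 :=
      (Nat.div_pos (Nat.divisor_le hr) (Nat.pos_of_mem_divisors hr)).ne'
    simp only [if_pos hodd, zero_pow hpos, mul_zero]
end

section
/- Let m be a positive integer and let x, y : ℕ → ℚ be functions satisfying y(r)² = x(r) for every odd positive integer r and y(2s) = x(s) for every positive integer s. Then I_m(x) = I_{2m}(y). -/
open Finset

/-- The even divisors of `2 * m` are the doubles of the divisors of `m`. -/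
theorem filter_even_divisors_two_mul (m : ℕ) (hm : 0 < m) :
    {r ∈ (2 * m).divisors | ¬ Odd r} = m.divisors.image (2 * ·) := by
  ext r
  simp only [mem_filter, Nat.mem_divisors, mem_image, Nat.not_odd_iff_even]
  constructor
  · rintro ⟨⟨hr, -⟩, he⟩
    obtain ⟨s, rfl⟩ := he.two_dvd
    exact ⟨s, ⟨Nat.dvd_of_mul_dvd_mul_left two_pos hr, hm.ne'⟩, rfl⟩
  · rintro ⟨s, ⟨hs, -⟩, rfl⟩
    exact ⟨⟨mul_dvd_mul_left 2 hs, by positivity⟩, even_two_mul s⟩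

/-- The odd divisors of `2 * m` are the odd divisors of `m`. -/
theorem filter_odd_divisors_two_mul (m : ℕ) :
    {r ∈ (2 * m).divisors | Odd r} = {r ∈ m.divisors | Odd r} := by
  ext r
  simp only [mem_filter, Nat.mem_divisors, and_congr_left_iff]
  intro hr
  rw [(Nat.coprime_two_right.mpr hr).dvd_mul_left]
  simp

/-- If `y(r)² = x(r)` for odd positive `r` and `y(2s) = x(s)` for positive `s`,
then `I_m(x) = I_{2m}(y)`. -/
theorem cycleIndex_eq_cycleIndex_two_mul (m : ℕ) (hm : 0 < m) (x y : ℕ → ℚ)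
    (hodd : ∀ r : ℕ, 0 < r → Odd r → y r ^ 2 = x r)
    (heven : ∀ s : ℕ, 0 < s → y (2 * s) = x s) :
    cycleIndex m x = cycleIndex (2 * m) y := by
  have key : ∑ r ∈ (2 * m).divisors, (Nat.totient r : ℚ) * y r ^ (2 * m / r) =
      2 * ∑ r ∈ m.divisors, (Nat.totient r : ℚ) * x r ^ (m / r) := by
    rw [← sum_filter_add_sum_filter_not _ (fun r => Odd r), filter_even_divisors_two_mul m hm,
      filter_odd_divisors_two_mul, sum_image (fun a _ b _ h => Nat.eq_of_mul_eq_mul_left two_pos h),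
      sum_filter, ← sum_add_distrib, mul_sum]
    refine sum_congr rfl fun r hr => ?_
    have hpos : 0 < r := Nat.pos_of_mem_divisors hr
    rw [Nat.mul_div_mul_left _ _ two_pos, heven r hpos]
    split_ifs with h
    · rw [Nat.mul_div_assoc 2 (Nat.dvd_of_mem_divisors hr), pow_mul, hodd r hpos h,
        Nat.totient_mul (Nat.coprime_two_left.mpr h), Nat.totient_two]
      push_cast
      ring
    · rw [Nat.totient_mul_of_prime_of_dvd Nat.prime_two (Nat.not_odd_iff_even.mp h).two_dvd]
      push_cast
      ring
  have hm' : (m : ℚ) ≠ 0 := by exact_mod_cast hm.ne'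
  rw [cycleIndex, cycleIndex, key]
  push_cast
  field_simp
end

section
/- Let m be a positive integer. Then for every function x : ℕ → ℚ, 2·I_{2m}(a) = I_m(b) + 1, where a : ℕ → ℚ is defined by a(r) := x(r) for odd r and a(r) := 1 for even r, and b : ℕ → ℚ is defined by b(r) := x(r)² for odd r and b(r) := 1 for even r. -/
open Finset

/-- Subtracting the constant cycle index `I_n(1) = 1` termwise. -/
lemma cycleIndex_eq_sum_sub_one_add_one {n : ℕ} (hn : n ≠ 0) (x : ℕ → ℚ) :
    cycleIndex n x =
      (1 / (n : ℚ)) * ∑ r ∈ n.divisors, (Nat.totient r : ℚ) * (x r ^ (n / r) - 1) + 1 := by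
  have hsum : ∑ r ∈ n.divisors, (Nat.totient r : ℚ) = n := by
    exact_mod_cast Nat.sum_totient n
  have hn' : (n : ℚ) ≠ 0 := by exact_mod_cast hn
  simp only [cycleIndex, mul_sub, mul_one, sum_sub_distrib, hsum]
  field_simp
  ring

/-- Even divisors contribute nothing, and the odd divisors of `2 * m` are those of `m`. -/
lemma sum_divisors_two_mul_primed {m : ℕ} (hm : m ≠ 0) (x : ℕ → ℚ) :
    ∑ r ∈ (2 * m).divisors,
        (Nat.totient r : ℚ) * ((if Odd r then x r else 1) ^ (2 * m / r) - 1) =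
      ∑ r ∈ m.divisors,
        (Nat.totient r : ℚ) * ((if Odd r then x r ^ 2 else 1) ^ (m / r) - 1) := by
  symm
  apply sum_subset_zero_on_sdiff
    (Nat.divisors_subset_of_dvd (by positivity) (Dvd.intro_left 2 rfl))
  · intro r hr
    rw [mem_sdiff, Nat.mem_divisors, Nat.mem_divisors] at hr
    have hodd : ¬ Odd r := fun h =>
      hr.2 ⟨(Nat.coprime_two_right.mpr h).dvd_of_dvd_mul_left hr.1.1, hm⟩
    simp [hodd]
  · intro r hr
    rw [Nat.mul_div_assoc 2 (Nat.dvd_of_mem_divisors hr)]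
    split_ifs
    · rw [pow_mul]
    · simp

/-- `2·I_{2m}(a) = I_m(b) + 1`, where `a(r) = x(r)` for odd `r`, `a(r) = 1` for
even `r`, and `b(r) = x(r)²` for odd `r`, `b(r) = 1` for even `r`. -/
theorem two_mul_cycleIndex_primed (m : ℕ) (hm : 0 < m) (x : ℕ → ℚ) :
    2 * cycleIndex (2 * m) (fun r => if Odd r then x r else 1) =
      cycleIndex m (fun r => if Odd r then x r ^ 2 else 1) + 1 := by
  have hm' : (m : ℚ) ≠ 0 := by exact_mod_cast hm.ne'
  rw [cycleIndex_eq_sum_sub_one_add_one (by positivity),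
    cycleIndex_eq_sum_sub_one_add_one hm.ne', sum_divisors_two_mul_primed hm.ne']
  push_cast
  field_simp
  ring
end

section
/- Let p > 3 be a prime such that q = (p+1)/2 is also prime. Then for every z ∈ ℚ, 2·c_o(p, z) = c_o(p+1, z) + 1. -/
open Finset

/-- Generating function by valency for oriented circulant graphs of odd prime
order `p`:
`c_o(p,z) = (1/(p-1))·(∑_{r | p-1, r even} φ(r) + ∑_{r | p-1, r odd} φ(r)·(1+2z^r)^{(p-1)/(2r)})`. -/
def cOrientedPrime (p : ℕ) (z : ℚ) : ℚ :=
  (1 / ((p : ℚ) - 1)) *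
    ((∑ r ∈ (p - 1).divisors.filter (fun r => Even r), (Nat.totient r : ℚ)) +
      ∑ r ∈ (p - 1).divisors.filter (fun r => Odd r),
        (Nat.totient r : ℚ) * (1 + 2 * z ^ r) ^ ((p - 1) / (2 * r)))

/-- Generating function by valency for oriented circulant graphs of order `2q`,
`q` an odd prime:
`c_o(2q,z) = (1/(q-1))·(∑_{r | q-1, r even} φ(r) + ∑_{r | q-1, r odd} φ(r)·(1+2z^r)^{(q-1)/r})`. -/
def cOrientedTwicePrime (q : ℕ) (z : ℚ) : ℚ :=
  (1 / ((q : ℚ) - 1)) *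
    ((∑ r ∈ (q - 1).divisors.filter (fun r => Even r), (Nat.totient r : ℚ)) +
      ∑ r ∈ (q - 1).divisors.filter (fun r => Odd r),
        (Nat.totient r : ℚ) * (1 + 2 * z ^ r) ^ ((q - 1) / r))

/-- The odd divisors of `2 * m` are the odd divisors of `m`. -/
theorem Nat.filter_odd_divisors_two_mul (m : ℕ) :
    (2 * m).divisors.filter (fun r => Odd r) = m.divisors.filter (fun r => Odd r) := by
  ext r
  simp only [Finset.mem_filter, Nat.mem_divisors]
  constructor
  · rintro ⟨⟨hr, h0⟩, ho⟩
    exact ⟨⟨(Nat.coprime_two_right.mpr ho).dvd_of_dvd_mul_left hr, by omega⟩, ho⟩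
  · rintro ⟨⟨hr, h0⟩, ho⟩
    exact ⟨⟨hr.mul_left 2, by omega⟩, ho⟩

/-- Gauss's identity `∑_{r ∣ n} φ(r) = n`, with the divisors split by parity. -/
theorem Nat.sum_totient_even_add_odd (n : ℕ) :
    (∑ r ∈ n.divisors.filter (fun r => Even r), (Nat.totient r : ℚ)) +
      ∑ r ∈ n.divisors.filter (fun r => Odd r), (Nat.totient r : ℚ) = n := by
  simp only [← Nat.not_even_iff_odd]
  rw [Finset.sum_filter_add_sum_filter_not]
  exact_mod_cast Nat.sum_totient n

/-- If `p > 3` and `q = (p+1)/2` are both prime, then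
`2·c_o(p,z) = c_o(p+1,z) + 1` (note `p + 1 = 2q`). -/
theorem two_mul_cOriented (p q : ℕ) (hp : p.Prime) (hp3 : 3 < p)
    (hq : q.Prime) (hpq : p + 1 = 2 * q) (z : ℚ) :
    2 * cOrientedPrime p z = cOrientedTwicePrime q z + 1 := by
  obtain ⟨m, rfl⟩ : ∃ m, q = m + 1 := ⟨q - 1, by have := hq.pos; omega⟩
  obtain rfl : p = 2 * m + 1 := by omega
  have hm : (m : ℚ) ≠ 0 := by
    have : m ≠ 0 := by omega
    exact_mod_cast this
  have hdouble := Nat.sum_totient_even_add_odd (2 * m)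
  have hsingle := Nat.sum_totient_even_add_odd m
  rw [Nat.filter_odd_divisors_two_mul] at hdouble
  simp only [cOrientedPrime, cOrientedTwicePrime, Nat.add_sub_cancel,
    Nat.filter_odd_divisors_two_mul, Nat.mul_div_mul_left _ _ two_pos]
  push_cast at hdouble ⊢
  rw [add_sub_cancel_right, add_sub_cancel_right]
  field_simp
  linarith
end

section
/- For every odd prime p, 2·C_sd(p) = C_u(p) + C_su(p); that is, twice the number of self-complementary directed circulant graphs of prime order p equals the number of undirected circulant graphs of order p plus the number of self-complementary undirected circulant graphs of order p. -/
open Finset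

/-- Number of self-complementary directed circulant graphs of odd prime order `p`:
`C_sd(p) = (1/(p-1))·∑_{r | p-1, r even} φ(r)·2^{(p-1)/r}`. -/
def Csd (p : ℕ) : ℚ :=
  (1 / ((p : ℚ) - 1)) *
    ∑ r ∈ (p - 1).divisors.filter (fun r => Even r),
      (Nat.totient r : ℚ) * (2 : ℚ) ^ ((p - 1) / r)

/-- Number of self-complementary undirected circulant graphs of odd prime order `p`:
`C_su(p) = (2/(p-1))·∑_{r | (p-1)/2, r even} φ(r)·2^{(p-1)/(2r)}`. -/
def Csu (p : ℕ) : ℚ :=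
  (2 / ((p : ℚ) - 1)) *
    ∑ r ∈ ((p - 1) / 2).divisors.filter (fun r => Even r),
      (Nat.totient r : ℚ) * (2 : ℚ) ^ ((p - 1) / (2 * r))

/-- Number of undirected circulant graphs of odd prime order `p`:
`C_u(p) = (2/(p-1))·∑_{r | (p-1)/2} φ(r)·2^{(p-1)/(2r)}`. -/
def Cu (p : ℕ) : ℚ :=
  (2 / ((p : ℚ) - 1)) *
    ∑ r ∈ ((p - 1) / 2).divisors,
      (Nat.totient r : ℚ) * (2 : ℚ) ^ ((p - 1) / (2 * r))

theorem filter_even_divisors_two_mul_s9 (m : ℕ) :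
    (2 * m).divisors.filter (fun r => Even r) = m.divisors.image (2 * ·) := by
  ext r
  simp only [mem_filter, Nat.mem_divisors, mem_image]
  constructor
  · rintro ⟨⟨hdvd, hm⟩, hr⟩
    obtain ⟨d, rfl⟩ := hr.two_dvd
    exact ⟨d, ⟨Nat.dvd_of_mul_dvd_mul_left two_pos hdvd, by omega⟩, rfl⟩
  · rintro ⟨d, ⟨hdvd, hm⟩, rfl⟩
    exact ⟨⟨Nat.mul_dvd_mul_left 2 hdvd, by omega⟩, even_two_mul d⟩

theorem totient_two_mul (d : ℕ) :
    Nat.totient (2 * d) = Nat.totient d + if Even d then Nat.totient d else 0 := by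
  split_ifs with h
  · rw [Nat.totient_two_mul_of_even h, two_mul]
  · rw [Nat.totient_two_mul_of_odd (Nat.not_even_iff_odd.mp h), add_zero]

theorem sum_even_divisors_two_mul (m : ℕ) (f : ℕ → ℚ) :
    ∑ r ∈ (2 * m).divisors.filter (fun r => Even r), (Nat.totient r : ℚ) * f r =
      ∑ d ∈ m.divisors, (Nat.totient d : ℚ) * f (2 * d) +
        ∑ d ∈ m.divisors.filter (fun d => Even d), (Nat.totient d : ℚ) * f (2 * d) := by
  rw [filter_even_divisors_two_mul_s9,
    sum_image fun _ _ _ _ h => Nat.eq_of_mul_eq_mul_left two_pos h,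
    sum_filter, ← sum_add_distrib]
  refine sum_congr rfl fun d _ => ?_
  rw [totient_two_mul]
  split_ifs <;> push_cast <;> ring

/-- For every odd prime `p`, `2·C_sd(p) = C_u(p) + C_su(p)`. -/
theorem two_mul_Csd_eq_Cu_add_Csu (p : ℕ) (hp : p.Prime) (hodd : Odd p) :
    2 * Csd p = Cu p + Csu p := by
  obtain ⟨m, rfl⟩ := hodd
  simp only [Csd, Cu, Csu, Nat.add_sub_cancel, Nat.mul_div_cancel_left m two_pos]
  rw [sum_even_divisors_two_mul m fun r => (2 : ℚ) ^ (2 * m / r)]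
  ring
end

section
/- Let p > 3 be a prime such that q = (p+1)/2 is also prime. Then 4·C_d(p) − C_d(p+1) = 4·C_u(p) − C_u(p+1). -/
open Finset

/-- Number of directed circulant graphs of odd prime order `p`:
`C_d(p) = (1/(p-1))·∑_{r | p-1} φ(r)·2^{(p-1)/r}`. -/
def Cd (p : ℕ) : ℚ :=
  (1 / ((p : ℚ) - 1)) *
    ∑ r ∈ (p - 1).divisors, (Nat.totient r : ℚ) * (2 : ℚ) ^ ((p - 1) / r)

/-- Number of directed circulant graphs of order `2q`, `q` an odd prime:
`C_d(2q) = 2·(1/(q-1))·∑_{r | q-1} φ(r)·4^{(q-1)/r}`. -/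
def CdTwice (q : ℕ) : ℚ :=
  2 * ((1 / ((q : ℚ) - 1)) *
    ∑ r ∈ (q - 1).divisors, (Nat.totient r : ℚ) * (4 : ℚ) ^ ((q - 1) / r))

/-- Number of undirected circulant graphs of order `2q`, `q` an odd prime:
`C_u(2q) = 2·(2/(q-1))·∑_{r | (q-1)/2} φ(r)·4^{(q-1)/(2r)}`. -/
def CuTwice (q : ℕ) : ℚ :=
  2 * ((2 / ((q : ℚ) - 1)) *
    ∑ r ∈ ((q - 1) / 2).divisors,
      (Nat.totient r : ℚ) * (4 : ℚ) ^ ((q - 1) / (2 * r)))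

/-- A divisor of `2 * n` that does not divide `n` is even. -/
theorem two_dvd_of_dvd_two_mul_of_not_dvd {r n : ℕ} (h : r ∣ 2 * n) (hn : ¬ r ∣ n) : 2 ∣ r := by
  by_contra h2
  exact hn ((Nat.coprime_comm.1 ((Nat.prime_two.coprime_iff_not_dvd).2 h2)).dvd_of_dvd_mul_left h)

/-- The sum over the divisors of `n` with base `4` is the part of the sum over the divisors of
`2 * n` with base `2` that comes from the divisors of `n`. -/
theorem sum_divisors_two_mul_sub (n : ℕ) (hn : n ≠ 0) :
    ∑ r ∈ (2 * n).divisors, (Nat.totient r : ℚ) * 2 ^ (2 * n / r) -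
        ∑ r ∈ n.divisors, (Nat.totient r : ℚ) * 4 ^ (n / r) =
      ∑ r ∈ (2 * n).divisors \ n.divisors, (Nat.totient r : ℚ) * 2 ^ (2 * n / r) := by
  have hsub : n.divisors ⊆ (2 * n).divisors :=
    Nat.divisors_subset_of_dvd (by positivity) (Dvd.intro_left 2 rfl)
  have hbase : ∑ r ∈ n.divisors, (Nat.totient r : ℚ) * 4 ^ (n / r) =
      ∑ r ∈ n.divisors, (Nat.totient r : ℚ) * 2 ^ (2 * n / r) := by
    refine sum_congr rfl fun r hr => ?_
    rw [Nat.mul_div_assoc 2 (Nat.dvd_of_mem_divisors hr), pow_mul]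
    norm_num
  rw [hbase, ← sum_sdiff hsub, add_sub_cancel_right]

/-- Doubling is a bijection from the divisors of `2 * m` not dividing `m` onto the divisors of
`4 * m` not dividing `2 * m`, and it doubles the totient. -/
theorem sum_divisors_sdiff_two_mul (m : ℕ) (hm : m ≠ 0) :
    ∑ r ∈ (2 * (2 * m)).divisors \ (2 * m).divisors,
        (Nat.totient r : ℚ) * 2 ^ (2 * (2 * m) / r) =
      2 * ∑ r ∈ (2 * m).divisors \ m.divisors, (Nat.totient r : ℚ) * 2 ^ (2 * m / r) := by
  rw [mul_sum]
  symm
  refine sum_bij (fun r _ => 2 * r) ?_ ?_ ?_ ?_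
  · intro r hr
    simp only [mem_sdiff, Nat.mem_divisors] at hr ⊢
    rw [Nat.mul_dvd_mul_iff_left two_pos, Nat.mul_dvd_mul_iff_left two_pos]
    exact ⟨⟨hr.1.1, by positivity⟩, fun h => hr.2 ⟨h.1, hm⟩⟩
  · intro a _ b _ h
    simpa using h
  · intro b hb
    simp only [mem_sdiff, Nat.mem_divisors] at hb
    have hnd : ¬ b ∣ 2 * m := fun h => hb.2 ⟨h, by positivity⟩
    obtain ⟨c, rfl⟩ := two_dvd_of_dvd_two_mul_of_not_dvd hb.1.1 hnd
    rw [Nat.mul_dvd_mul_iff_left two_pos] at hb hnd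
    refine ⟨c, ?_, rfl⟩
    simp only [mem_sdiff, Nat.mem_divisors]
    exact ⟨⟨hb.1.1, by positivity⟩, fun h => hnd h.1⟩
  · intro r hr
    simp only [mem_sdiff, Nat.mem_divisors] at hr
    have heven : 2 ∣ r := two_dvd_of_dvd_two_mul_of_not_dvd hr.1.1 fun h => hr.2 ⟨h, hm⟩
    rw [Nat.mul_div_mul_left _ _ two_pos,
      Nat.totient_mul_of_prime_of_dvd Nat.prime_two heven]
    push_cast
    ring

/-- If `p > 3` and `q = (p+1)/2` are both prime, then
`4·C_d(p) − C_d(p+1) = 4·C_u(p) − C_u(p+1)`. -/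
theorem four_mul_Cd_sub (p q : ℕ) (hp : p.Prime) (hp3 : 3 < p)
    (hq : q.Prime) (hpq : p + 1 = 2 * q) :
    4 * Cd p - CdTwice q = 4 * Cu p - CuTwice q := by
  obtain ⟨m, rfl⟩ : ∃ m, q = 2 * m + 1 := hq.odd_of_ne_two (by omega)
  obtain rfl : p = 2 * (2 * m) + 1 := by omega
  have hm : m ≠ 0 := by omega
  have hmQ : (m : ℚ) ≠ 0 := by exact_mod_cast hm
  have hd := sum_divisors_two_mul_sub (2 * m) (by positivity)
  have hu := sum_divisors_two_mul_sub m hm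
  rw [sum_divisors_sdiff_two_mul m hm, ← hu] at hd
  simp only [Cd, Cu, CdTwice, CuTwice, Nat.add_sub_cancel, Nat.mul_div_cancel_left _ two_pos,
    ← Nat.div_div_eq_div_mul]
  push_cast
  field_simp
  linear_combination 8 * (m : ℚ) * hd
end

section
/- Let p > 3 be a prime such that q = (p+1)/2 is also prime. Then for every z ∈ ℚ, 2·(1+z)·(c_d(p, z) − c_u(p, z)) = c_d(p+1, z) − c_u(p+1, z); that is, the generating function for directed circulant graphs of order p+1 that are not undirected graphs equals 2·(1+z) times the corresponding generating function for order p. -/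
open Finset

/-- Generating function by valency for directed circulant graphs of odd prime
order `p`: `c_d(p,z) = (1/(p-1))·∑_{r | p-1} φ(r)·(1+z^r)^{(p-1)/r}`. -/
def cDPrime (p : ℕ) (z : ℚ) : ℚ :=
  (1 / ((p : ℚ) - 1)) *
    ∑ r ∈ (p - 1).divisors, (Nat.totient r : ℚ) * (1 + z ^ r) ^ ((p - 1) / r)

/-- Generating function by valency for undirected circulant graphs of odd prime
order `p`: `c_u(p,z) = (2/(p-1))·∑_{r | (p-1)/2} φ(r)·(1+z^{2r})^{(p-1)/(2r)}`. -/
def cUPrime (p : ℕ) (z : ℚ) : ℚ :=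
  (2 / ((p : ℚ) - 1)) *
    ∑ r ∈ ((p - 1) / 2).divisors,
      (Nat.totient r : ℚ) * (1 + z ^ (2 * r)) ^ ((p - 1) / (2 * r))

/-- Generating function by valency for directed circulant graphs of order `2q`,
`q` an odd prime:
`c_d(2q,z) = (1+z)·(1/(q-1))·∑_{r | q-1} φ(r)·(1+z^r)^{2(q-1)/r}`. -/
def cDTwicePrime (q : ℕ) (z : ℚ) : ℚ :=
  (1 + z) * ((1 / ((q : ℚ) - 1)) *
    ∑ r ∈ (q - 1).divisors, (Nat.totient r : ℚ) * (1 + z ^ r) ^ (2 * (q - 1) / r))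

/-- Generating function by valency for undirected circulant graphs of order `2q`,
`q` an odd prime:
`c_u(2q,z) = (1+z)·(2/(q-1))·∑_{r | (q-1)/2} φ(r)·(1+z^{2r})^{(q-1)/r}`. -/
def cUTwicePrime (q : ℕ) (z : ℚ) : ℚ :=
  (1 + z) * ((2 / ((q : ℚ) - 1)) *
    ∑ r ∈ ((q - 1) / 2).divisors,
      (Nat.totient r : ℚ) * (1 + z ^ (2 * r)) ^ ((q - 1) / r))

/-- The divisors of `4k` that do not divide `2k` are the doubles of the divisors of `2k` that do
not divide `k`; all of the latter are even, so doubling them doubles the totient. -/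
theorem sum_divisors_four_mul_sub_sum_divisors_two_mul {k : ℕ} (hk : k ≠ 0) (f : ℕ → ℚ) :
    ∑ r ∈ (4 * k).divisors, (Nat.totient r : ℚ) * f r -
        ∑ r ∈ (2 * k).divisors, (Nat.totient r : ℚ) * f r =
      2 * (∑ r ∈ (2 * k).divisors, (Nat.totient r : ℚ) * f (2 * r) -
        ∑ r ∈ k.divisors, (Nat.totient r : ℚ) * f (2 * r)) := by
  have even_of_dvd {n r : ℕ} (hr : r ∣ 2 * n) (hrn : ¬ r ∣ n) : 2 ∣ r := by
    by_contra h
    exact hrn ((((Nat.prime_two.coprime_iff_not_dvd.2 h).symm).dvd_mul_left).1 hr)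
  have four_mul : 4 * k = 2 * (2 * k) := by ring
  have h₁ : (2 * k).divisors ⊆ (4 * k).divisors :=
    Nat.divisors_subset_of_dvd (by omega) ⟨2, by ring⟩
  have h₂ : k.divisors ⊆ (2 * k).divisors :=
    Nat.divisors_subset_of_dvd (by omega) ⟨2, by ring⟩
  rw [← sum_sdiff_eq_sub h₁, ← sum_sdiff_eq_sub h₂, mul_sum]
  symm
  refine sum_nbij (2 * ·) ?_ ?_ ?_ ?_
  · intro s hs
    simp only [mem_sdiff, Nat.mem_divisors] at hs ⊢
    rw [four_mul, Nat.mul_dvd_mul_iff_left two_pos, Nat.mul_dvd_mul_iff_left two_pos]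
    exact ⟨⟨hs.1.1, by omega⟩, fun h => hs.2 ⟨h.1, hk⟩⟩
  · intro a _ b _ hab
    simpa using hab
  · intro r hr
    simp only [coe_sdiff, Set.mem_sdiff, mem_coe, Nat.mem_divisors] at hr
    obtain ⟨⟨hr, -⟩, hr'⟩ := hr
    rw [four_mul] at hr
    obtain ⟨s, rfl⟩ := even_of_dvd hr fun h => hr' ⟨h, by omega⟩
    refine ⟨s, ?_, rfl⟩
    simp only [coe_sdiff, Set.mem_sdiff, mem_coe, Nat.mem_divisors]
    rw [Nat.mul_dvd_mul_iff_left two_pos] at hr hr'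
    exact ⟨⟨hr, by omega⟩, fun h => hr' ⟨h.1, by omega⟩⟩
  · intro s hs
    simp only [mem_sdiff, Nat.mem_divisors] at hs
    have hs2 : 2 ∣ s := even_of_dvd hs.1.1 fun h => hs.2 ⟨h, hk⟩
    rw [Nat.totient_mul_of_prime_of_dvd Nat.prime_two hs2]
    push_cast
    ring

/-- If `p > 3` and `q = (p+1)/2` are both prime, then for every `z`,
`2·(1+z)·(c_d(p,z) − c_u(p,z)) = c_d(p+1,z) − c_u(p+1,z)`. -/
theorem two_mul_one_add_z_mul_cDsubU (p q : ℕ) (hp : p.Prime) (hp3 : 3 < p)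
    (hq : q.Prime) (hpq : p + 1 = 2 * q) (z : ℚ) :
    2 * (1 + z) * (cDPrime p z - cUPrime p z) =
      cDTwicePrime q z - cUTwicePrime q z := by
  obtain ⟨k, rfl⟩ : ∃ k, q = 2 * k + 1 := hq.odd_of_ne_two (by omega)
  obtain rfl : p = 4 * k + 1 := by omega
  have hk : k ≠ 0 := by omega
  have hkQ : (k : ℚ) ≠ 0 := by exact_mod_cast hk
  have key := sum_divisors_four_mul_sub_sum_divisors_two_mul hk
    fun r => (1 + z ^ r) ^ (4 * k / r)
  have four_mul : 4 * k = 2 * (2 * k) := by ring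
  have half_four : 4 * k / 2 = 2 * k := by omega
  have half_two : 2 * k / 2 = k := by omega
  have div_two_mul (r : ℕ) : 4 * k / (2 * r) = 2 * k / r := by
    rw [four_mul, Nat.mul_div_mul_left _ _ two_pos]
  simp only [div_two_mul] at key
  simp only [cDPrime, cUPrime, cDTwicePrime, cUTwicePrime, Nat.add_sub_cancel, half_four,
    half_two, div_two_mul, ← four_mul]
  push_cast
  simp only [add_sub_cancel_right]
  field_simp
  linear_combination 4 * (1 + z) * key
end
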